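/- arXiv:1506.07148 — 2 statements merged into one kernel-verified Lean document; each statement's English description precedes it below -/
import Mathlib

section
/- For every integer l > 1, there exists a finite solvable group G such that 1 is the only prime power among the degrees of the irreducible complex characters of G, and the Fitting height of G equals l. -/
/-!
The height is raised one step at a time. Let `A` be a finite solvable CDG of Fitting height
`n ≥ 1`, let `q > |A|` be a prime with `q ≡ 1 mod 6`, let `K = ZMod q`, and let `A × Kˣ` act on
the space `N` of functions `A → K`, with `A` translating and `Kˣ` scaling. Then
`G = N ⋊ (A × Kˣ)` is a solvable CDG of Fitting height `n + 1`.

*Degrees* (`isCDG_semidirectProduct`). Let `W` be irreducible. If `N` acts trivially, then `Kˣ`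
acts by scalars because it is central modulo `N`, so `W` is irreducible on `A` and the hypothesis
on `A` applies. Otherwise `N` fixes no nonzero vector, so its elements sum to zero on `W`. For
`b ≠ 1` in `Kˣ` the map `1 - b` is bijective on `N`, hence all elements of the coset `N b` are
conjugate and the character vanishes at `b`. Averaging the character over `Kˣ` shows that
`|Kˣ| = q - 1` divides the degree; so `6` does, and the degree is not a prime power. The only
representation theory needed is Schur's lemma (`simple_iff_scalar`).

*Height*. Since `N` and `Kˣ` are commutative, a Fitting series of `A` of positive length gives one
of `G` that is longer by one (`IsFittingSeries.prod_comm`, `IsFittingSeries.comap_succ`).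
Conversely, a nilpotent normal subgroup of `G` acts unipotently on `N`, so its image in `A`, which
acts faithfully on `N`, is a `q`-group and therefore trivial (`right_fst_eq_one`). Thus the first
term of any Fitting series of `G` dies in `A`, and `A` has a series that is shorter by one
(`IsFittingSeries.map_succ`).
-/

/-- The set of degrees of the irreducible complex characters of `G`. -/
def charDegrees (G : Type) [Group G] : Set ℕ :=
  {d | ∃ V : FDRep ℂ G, CategoryTheory.Simple V ∧ Module.finrank ℂ V = d}

/-- `G` is a *composite degree group* (CDG): `1` is the only prime power among the degrees of
the irreducible complex characters of `G`. -/
def IsCDG (G : Type) [Group G] : Prop :=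
  ∀ d ∈ charDegrees G, IsPrimePow d → d = 1

/-- The quotient `B/A` (for normal subgroups `A ≤ B` of `G`) is a nilpotent group. -/
def IsNilpotentQuot {G : Type*} [Group G] (A B : Subgroup G) [A.Normal] : Prop :=
  Group.IsNilpotent (↥(B.map (QuotientGroup.mk' A)))

/-- `F` is a normal series `⊥ = F 0 ≤ F 1 ≤ ⋯ ≤ F n = ⊤` of normal subgroups of `G`
with every quotient `F (i+1) / F i` nilpotent. -/
def IsFittingSeries {G : Type*} [Group G] (F : ℕ → Subgroup G) (n : ℕ) : Prop :=
  F 0 = ⊥ ∧ F n = ⊤ ∧ (∀ i, (F i).Normal) ∧ (∀ i, i < n → F i ≤ F (i + 1)) ∧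
    ∀ i, i < n → ∀ hi : (F i).Normal, @IsNilpotentQuot G _ (F i) (F (i + 1)) hi

/-- The Fitting height of `G` equals `n`: `n` is the length of a shortest normal series of `G`
with nilpotent quotients. -/
def FittingHeightIs (G : Type*) [Group G] (n : ℕ) : Prop :=
  (∃ F : ℕ → Subgroup G, IsFittingSeries F n) ∧
    ∀ m : ℕ, (∃ F : ℕ → Subgroup G, IsFittingSeries F m) → n ≤ m

/-! ### Fitting series -/

/-- Nilpotency of `B/A`, expressed by the lower central series of `B` in the ambient group. -/
lemma isNilpotentQuot_iff {G : Type*} [Group G] (A B : Subgroup G) [A.Normal] :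
    IsNilpotentQuot A B ↔ ∃ n, B.lowerCentralSeries n ≤ A := by
  unfold IsNilpotentQuot
  rw [Subgroup.isNilpotent_iff_lowerCentralSeries]
  refine exists_congr fun n => ?_
  rw [← Subgroup.map_lowerCentralSeries, Subgroup.map_eq_bot_iff, QuotientGroup.ker_mk']

lemma IsFittingSeries.lcs {G : Type*} [Group G] {F : ℕ → Subgroup G} {n : ℕ}
    (h : IsFittingSeries F n) {i : ℕ} (hi : i < n) :
    ∃ c, (F (i + 1)).lowerCentralSeries c ≤ F i := by
  have := h.2.2.1 i
  exact (isNilpotentQuot_iff _ _).1 (h.2.2.2.2 i hi inferInstance)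

/-- A surjection whose kernel contains the first term of a Fitting series shortens it by one. -/
lemma IsFittingSeries.map_succ {G H : Type*} [Group G] [Group H] {F : ℕ → Subgroup G} {n : ℕ}
    (h : IsFittingSeries F (n + 1)) (f : G →* H) (hf : Function.Surjective f)
    (h1 : F 1 ≤ f.ker) : IsFittingSeries (fun i => (F (i + 1)).map f) n := by
  refine ⟨(Subgroup.map_eq_bot_iff _).2 h1, ?_, fun i => (h.2.2.1 _).map f hf,
    fun i hi => Subgroup.map_mono (h.2.2.2.1 (i + 1) (by omega)), fun i hi hn => ?_⟩
  · simp only [h.2.1]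
    exact Subgroup.map_top_of_surjective f hf
  · rw [isNilpotentQuot_iff]
    obtain ⟨c, hc⟩ := h.lcs (i := i + 1) (by omega)
    refine ⟨c, ?_⟩
    rw [← Subgroup.map_lowerCentralSeries]
    exact Subgroup.map_mono hc

/-- Pulling a Fitting series back along a surjection with commutative kernel lengthens it
by one. -/
lemma IsFittingSeries.comap_succ {G H : Type*} [Group G] [Group H] {F : ℕ → Subgroup H} {n : ℕ}
    (h : IsFittingSeries F n) (f : G →* H)
    (hker : f.ker.lowerCentralSeries 1 = ⊥) :
    IsFittingSeries (fun i => Nat.casesOn i ⊥ fun j => (F j).comap f) (n + 1) := by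
  refine ⟨rfl, ?_, ?_, ?_, ?_⟩
  · simp [h.2.1]
  · rintro (_ | i)
    · exact inferInstanceAs (⊥ : Subgroup G).Normal
    · exact (h.2.2.1 i).comap f
  · rintro (_ | i) hi
    · exact bot_le
    · exact Subgroup.comap_mono (h.2.2.2.1 i (by omega))
  · rintro (_ | i) hi hn
    · rw [isNilpotentQuot_iff]
      refine ⟨1, ?_⟩
      simp only [h.1]
      exact hker.le
    · rw [isNilpotentQuot_iff]
      obtain ⟨c, hc⟩ := h.lcs (i := i) (by omega)
      refine ⟨c, ?_⟩
      change _ ≤ (F i).comap f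
      rw [← Subgroup.map_le_iff_le_comap, Subgroup.map_lowerCentralSeries]
      exact (Subgroup.lowerCentralSeries_mono c (Subgroup.map_comap_le f _)).trans hc

/-- A commutative direct factor does not increase a positive Fitting height. -/
lemma IsFittingSeries.prod_comm {A B : Type*} [Group A] [CommGroup B] {F : ℕ → Subgroup A}
    {n : ℕ} (h : IsFittingSeries F n) (hn : 1 ≤ n) :
    IsFittingSeries
      (fun i => Nat.casesOn i ⊥ fun j => (F (j + 1)).prod (⊤ : Subgroup B)) n := by
  obtain ⟨n, rfl⟩ : ∃ k, n = k + 1 := ⟨n - 1, by omega⟩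
  refine ⟨rfl, ?_, ?_, ?_, ?_⟩
  · simp [h.2.1]
  · rintro (_ | i)
    · exact inferInstanceAs (⊥ : Subgroup (A × B)).Normal
    · have := h.2.2.1 (i + 1)
      exact Subgroup.prod_normal (F (i + 1)) ⊤
  · rintro (_ | i) hi
    · exact bot_le
    · exact Subgroup.prod_mono (h.2.2.2.1 (i + 1) (by omega)) le_rfl
  · rintro (_ | i) hi hn
    · rw [isNilpotentQuot_iff]
      obtain ⟨c, hc⟩ := h.lcs (i := 0) (by omega)
      refine ⟨c + 1, ?_⟩
      change ((F 1).prod (⊤ : Subgroup B)).lowerCentralSeries (c + 1) ≤ ⊥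
      rw [Subgroup.lowerCentralSeries_prod, ← Subgroup.bot_prod_bot]
      refine Subgroup.prod_mono
        (((F 1).lowerCentralSeries_antitone c.le_succ).trans (hc.trans h.1.le)) ?_
      refine (Subgroup.lowerCentralSeries_antitone ⊤ (Nat.le_add_left 1 c)).trans ?_
      rw [Subgroup.top_lowerCentralSeries_one, (commutator_eq_bot_iff_center_eq_top B).2]
      exact CommGroup.center_eq_top
    · rw [isNilpotentQuot_iff]
      obtain ⟨c, hc⟩ := h.lcs (i := i + 1) (by omega)
      refine ⟨c, ?_⟩
      change ((F (i + 2)).prod (⊤ : Subgroup B)).lowerCentralSeries c ≤ (F (i + 1)).prod ⊤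
      rw [Subgroup.lowerCentralSeries_prod]
      exact Subgroup.prod_mono hc le_top

/-! ### Character degrees -/

section Reps

open CategoryTheory Representation

/-- Schur's lemma and its converse for complex representations of a finite group: simplicity
means that the commuting linear endomorphisms are exactly the scalars. -/
lemma simple_iff_scalar {G : Type} [Group G] [Finite G] (W : FDRep ℂ G) :
    Simple W ↔ Nontrivial W ∧ ∀ f : W →ₗ[ℂ] W, (∀ g, f ∘ₗ W.ρ g = W.ρ g ∘ₗ f) →
      ∃ c : ℂ, f = c • LinearMap.id := by
  have hmem (f : W →ₗ[ℂ] W) :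
      f ∈ (linHom W.ρ W.ρ).invariants ↔ ∀ g, f ∘ₗ W.ρ g = W.ρ g ∘ₗ f := by
    rw [mem_invariants]
    refine forall_congr' fun g => ?_
    rw [linHom_apply]
    constructor
    · intro h
      conv_lhs => rw [← h]
      rw [LinearMap.comp_assoc, LinearMap.comp_assoc, ← Module.End.mul_eq_comp (W.ρ g⁻¹),
        ← map_mul]
      simp
      rfl
    · intro h
      rw [← LinearMap.comp_assoc, ← h, LinearMap.comp_assoc,
        ← Module.End.mul_eq_comp (W.ρ g), ← map_mul]
      simp
      rfl
  have hid : (LinearMap.id : W →ₗ[ℂ] W) ∈ (linHom W.ρ W.ρ).invariants :=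
    (hmem _).2 fun g => rfl
  have : NeZero (Nat.card G : ℂ) := ⟨by exact_mod_cast Nat.card_pos.ne'⟩
  rw [FDRep.simple_iff_end_is_rank_one,
    ← LinearEquiv.finrank_eq (linHom.invariantsEquivFDRepHom W W)]
  constructor
  · intro h
    have hW : Nontrivial W := by
      by_contra hW
      rw [not_nontrivial_iff_subsingleton] at hW
      have : Subsingleton (linHom W.ρ W.ρ).invariants :=
        ⟨fun a b => Subtype.ext (LinearMap.ext fun x => Subsingleton.elim _ _)⟩
      rw [Module.finrank_zero_of_subsingleton] at h
      exact zero_ne_one h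
    refine ⟨hW, fun f hf => ?_⟩
    have hne : (⟨LinearMap.id, hid⟩ : (linHom W.ρ W.ρ).invariants) ≠ 0 := by
      intro h0
      obtain ⟨x, hx⟩ := exists_ne (0 : W)
      exact hx (LinearMap.congr_fun (congrArg Subtype.val h0) x)
    obtain ⟨c, hc⟩ := (finrank_eq_one_iff_of_nonzero' _ hne).1 h ⟨f, (hmem f).2 hf⟩
    exact ⟨c, (congrArg Subtype.val hc).symm⟩
  · rintro ⟨hW, h⟩
    have hne : (⟨LinearMap.id, hid⟩ : (linHom W.ρ W.ρ).invariants) ≠ 0 := by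
      intro h0
      obtain ⟨x, hx⟩ := exists_ne (0 : W)
      exact hx (LinearMap.congr_fun (congrArg Subtype.val h0) x)
    refine (finrank_eq_one_iff_of_nonzero' _ hne).2 fun f => ?_
    obtain ⟨c, hc⟩ := h f.1 ((hmem _).1 f.2)
    exact ⟨c, Subtype.ext hc.symm⟩

lemma isCDG_of_comm (G : Type) [CommGroup G] [Finite G] : IsCDG G := by
  rintro d ⟨W, hW, rfl⟩ -
  obtain ⟨hne, h⟩ := (simple_iff_scalar W).1 hW
  have hs : ∀ f : W →ₗ[ℂ] W, ∃ c : ℂ, f = c • LinearMap.id := by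
    refine fun f => h f fun g => ?_
    obtain ⟨c, hc⟩ := h (W.ρ g) fun g' => by
      rw [← Module.End.mul_eq_comp, ← Module.End.mul_eq_comp, ← map_mul, ← map_mul, mul_comm]
    rw [hc]
    ext; simp
  have hid : (LinearMap.id : W →ₗ[ℂ] W) ≠ 0 := fun h0 => by
    obtain ⟨x, hx⟩ := exists_ne (0 : W)
    exact hx (LinearMap.congr_fun h0 x)
  have h1 : Module.finrank ℂ (W →ₗ[ℂ] W) = 1 :=
    (finrank_eq_one_iff_of_nonzero' _ hid).2 fun f => (hs f).imp fun c hc => hc.symm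
  rw [Module.finrank_linearMap] at h1
  exact Nat.eq_one_of_mul_eq_one_right h1

open SemidirectProduct in
/-- The degree computation. The sum of the operators `ρ n` over `n : N` is central, hence a
scalar. If the scalar is nonzero, `N` acts trivially, `B` acts by scalars, and the representation
stays irreducible on `A`. If it is zero, then the character vanishes on nontrivial elements of `B`
(all elements of `N * b` being conjugate), so the degree is a multiple of `Nat.card B`. -/
lemma isCDG_semidirectProduct {N A B : Type} [Group N] [Group A] [CommGroup B]
    [Finite N] [Finite A] [Finite B] (φ : A × B →* MulAut N)
    (hB : ∀ b : B, b ≠ 1 → ∀ n, ∃ w, w * (φ (1, b) w)⁻¹ = n)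
    (h6 : 6 ∣ Nat.card B) (hA : IsCDG A) : IsCDG (N ⋊[φ] (A × B)) := by
  have : Finite (N ⋊[φ] (A × B)) := Finite.of_equiv _ equivProd.symm
  have := Fintype.ofFinite N
  have := Fintype.ofFinite B
  rintro d ⟨W, hW, rfl⟩ hd
  obtain ⟨hne, hs⟩ := (simple_iff_scalar W).1 hW
  obtain ⟨c, hc⟩ := hs (∑ n : N, W.ρ (inl n)) fun g => by
    simp only [← Module.End.mul_eq_comp, Finset.sum_mul, Finset.mul_sum, ← map_mul]
    let e : MulAut N := (MulAut.conj g.left) * φ g.right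
    refine (Fintype.sum_equiv e.toEquiv _ _ fun n => ?_).symm
    congr 1
    ext <;> simp [e, mul_assoc]
  have habs : ∀ m : N, W.ρ (inl m) ∘ₗ (∑ n : N, W.ρ (inl n)) = ∑ n : N, W.ρ (inl n) := by
    intro m
    simp only [← Module.End.mul_eq_comp, Finset.mul_sum, ← map_mul]
    exact Fintype.sum_equiv (Equiv.mulLeft m) _ _ fun n => rfl
  by_cases hc0 : c = 0
  · exfalso
    rw [hc0, zero_smul] at hc
    have hchar : ∀ b : B, b ≠ 1 → LinearMap.trace ℂ W (W.ρ (inr (1, b))) = 0 := by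
      intro b hb
      have hconj : ∀ n : N, LinearMap.trace ℂ W (W.ρ (inl n) * W.ρ (inr (1, b))) =
          LinearMap.trace ℂ W (W.ρ (inr (1, b))) := by
        intro n
        obtain ⟨w, hw⟩ := hB b hb n
        have h1 : (inl n * inr (1, b) : N ⋊[φ] (A × B)) = inl w * inr (1, b) * (inl w)⁻¹ := by
          rw [← hw]
          ext <;> simp
        rw [← map_mul, h1]
        exact FDRep.char_conj W _ _
      have h2 : LinearMap.trace ℂ W ((∑ n : N, W.ρ (inl n)) * W.ρ (inr (1, b))) = 0 := by
        rw [hc, zero_mul, map_zero]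
      rw [Finset.sum_mul, map_sum, Finset.sum_congr rfl fun n _ => hconj n] at h2
      simpa using h2
    let U : FDRep ℂ B := FDRep.of (W.ρ.comp (inr.comp (MonoidHom.inr A B)))
    have hBne : (Nat.card B : ℂ) ≠ 0 := by exact_mod_cast Nat.card_pos.ne'
    have : Invertible (Nat.card B : ℂ) := invertibleOfNonzero hBne
    have havg := FDRep.average_char_eq_finrank_invariants U
    have hsum : ∑ b : B, U.character b = U.character 1 :=
      Finset.sum_eq_single 1 (fun b _ hb => hchar b hb) fun h => absurd (Finset.mem_univ _) h
    rw [hsum, FDRep.char_one] at havg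
    have hdvd : Nat.card B ∣ Module.finrank ℂ W := by
      refine ⟨Module.finrank ℂ (invariants U.ρ), ?_⟩
      rw [inv_mul_eq_iff_eq_mul₀ hBne] at havg
      exact_mod_cast havg
    obtain ⟨p, k, hp, -, hpk⟩ := hd
    rw [← hpk] at hdvd
    have hp' := hp.nat_prime
    have h2 : (2 : ℕ) = p := (Nat.prime_dvd_prime_iff_eq Nat.prime_two hp').1
      (Nat.prime_two.dvd_of_dvd_pow (((by norm_num : 2 ∣ 6).trans h6).trans hdvd))
    have h3 : (3 : ℕ) = p := (Nat.prime_dvd_prime_iff_eq Nat.prime_three hp').1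
      (Nat.prime_three.dvd_of_dvd_pow (((by norm_num : 3 ∣ 6).trans h6).trans hdvd))
    omega
  · have hN : ∀ m : N, W.ρ (inl m) = LinearMap.id := by
      intro m
      have h1 := habs m
      rw [hc] at h1
      ext x
      have h2 := LinearMap.congr_fun h1 x
      simp only [LinearMap.comp_apply, LinearMap.smul_apply, LinearMap.id_apply, map_smul] at h2
      exact smul_right_injective _ hc0 h2
    have hg : ∀ g : N ⋊[φ] (A × B), W.ρ g = W.ρ (inr g.right) := by
      intro g
      conv_lhs => rw [← inl_left_mul_inr_right g, map_mul, hN]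
      rfl
    have hBs : ∀ b : B, ∃ s : ℂ, W.ρ (inr (1, b)) = s • LinearMap.id := by
      refine fun b => hs _ fun g => ?_
      rw [← Module.End.mul_eq_comp, ← Module.End.mul_eq_comp, ← map_mul, ← map_mul,
        hg, hg (g * _)]
      congr 2
      ext <;> simp [mul_comm]
    let U : FDRep ℂ A := FDRep.of (W.ρ.comp (inr.comp (MonoidHom.inl A B)))
    have hU : Simple U := by
      refine (simple_iff_scalar U).2 ⟨hne, fun f hf => hs f fun g => ?_⟩
      obtain ⟨s, hs'⟩ := hBs g.right.2
      have h1 : W.ρ g = s • W.ρ (inr (g.right.1, 1)) := by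
        have : (g.right : A × B) = (g.right.1, 1) * (1, g.right.2) := by ext <;> simp
        rw [hg, this, map_mul, map_mul, hs']
        ext; simp
      have h2 : f ∘ₗ W.ρ (inr (g.right.1, 1)) = W.ρ (inr (g.right.1, 1)) ∘ₗ f := hf g.right.1
      rw [h1, LinearMap.comp_smul, LinearMap.smul_comp, h2]
    exact hA _ ⟨U, hU, rfl⟩ hd

end Reps

/-! ### The translation module -/

/-- The action of `A × Kˣ` on functions `A → K`: left translation by `A`, scaling by `Kˣ`. -/
def transAut (A K : Type) [Group A] [Field K] :
    A × Kˣ →* MulAut (Multiplicative (A → K)) where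
  toFun h :=
    { toFun := fun f => .ofAdd fun x => h.2 * f.toAdd (h.1⁻¹ * x)
      invFun := fun f => .ofAdd fun x => (h.2⁻¹ : Kˣ) * f.toAdd (h.1 * x)
      left_inv := fun f => by ext x; simp
      right_inv := fun f => by ext x; simp
      map_mul' := fun f g => by ext x; simp [mul_add] }
  map_one' := by ext; simp
  map_mul' h h' := by ext; simp [mul_assoc]

/-- The linear operator underlying `transAut`. -/
def transEnd {A K : Type} [Group A] [Field K] (h : A × Kˣ) : Module.End K (A → K) where
  toFun f x := h.2 * f (h.1⁻¹ * x)
  map_add' f g := by ext x; simp [mul_add]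
  map_smul' c f := by ext x; simp [mul_left_comm]

lemma transEnd_pow {A K : Type} [Group A] [Field K] (h : A × Kˣ) (m : ℕ) (f : A → K) (x : A) :
    (transEnd h ^ m) f x = (h.2 : K) ^ m * f ((h.1⁻¹) ^ m * x) := by
  induction m generalizing x with
  | zero => simp
  | succ m ih =>
    rw [pow_succ', Module.End.mul_apply]
    change (h.2 : K) * (transEnd h ^ m) f (h.1⁻¹ * x) = _
    rw [ih, pow_succ, pow_succ, mul_assoc, mul_assoc, ← mul_assoc, mul_comm (h.2 : K), mul_assoc]

open SemidirectProduct commutatorElement in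
/-- A nilpotent normal subgroup acts unipotently on the translation module, and a unipotent
operator in characteristic `q` has `q`-power order; so its image in `A` is a `q`-group, which is
trivial when `q` does not divide the order of `A`. -/
lemma right_fst_eq_one {A : Type} [Group A] [Finite A] (q : ℕ) [Fact q.Prime]
    (hq : ¬ q ∣ Nat.card A)
    (S : Subgroup (Multiplicative (A → ZMod q) ⋊[transAut A (ZMod q)] (A × (ZMod q)ˣ)))
    [S.Normal] (c : ℕ) (hc : S.lowerCentralSeries c = ⊥)
    {g : Multiplicative (A → ZMod q) ⋊[transAut A (ZMod q)] (A × (ZMod q)ˣ)} (hg : g ∈ S) :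
    g.right.1 = 1 := by
  set T : Module.End (ZMod q) (A → ZMod q) := transEnd g.right with hT
  -- the translation module is commutative, so bracketing with `g` is applying `1 - T`
  have hcomm : ∀ w : A → ZMod q,
      ⁅(inl (.ofAdd w) : Multiplicative (A → ZMod q) ⋊[transAut A (ZMod q)] (A × (ZMod q)ˣ)), g⁆ =
        inl (.ofAdd ((1 - T) w)) := by
    intro w
    rw [commutatorElement_def]
    have h1 : g * (inl (.ofAdd w))⁻¹ * g⁻¹ = inl (.ofAdd (-(T w))) := by
      conv_lhs => rw [← inl_left_mul_inr_right g]
      have h2 : (inr g.right * (inl (.ofAdd w))⁻¹ * (inr g.right)⁻¹ :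
          Multiplicative (A → ZMod q) ⋊[transAut A (ZMod q)] (A × (ZMod q)ˣ)) =
          inl (.ofAdd (-(T w))) := by
        rw [← map_inv inl, ← map_inv inr, ← inl_aut, ← ofAdd_neg]
        congr 1
        rw [← map_neg]
        rfl
      rw [mul_inv_rev, show ∀ a b c d e : Multiplicative (A → ZMod q) ⋊[transAut A (ZMod q)]
        (A × (ZMod q)ˣ), a * b * c * (d * e) = a * (b * c * d) * e from
          fun a b c d e => by group, h2, ← map_inv, ← map_mul, ← map_mul, mul_comm,
        inv_mul_cancel_left]
    rw [mul_assoc, mul_assoc, ← mul_assoc g, h1, ← map_mul, ← ofAdd_add, ← sub_eq_add_neg]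
    rfl
  have hmem : ∀ k (w : A → ZMod q),
      inl (.ofAdd (((1 - T) ^ (k + 1)) w)) ∈ S.lowerCentralSeries k := by
    intro k
    induction k with
    | zero =>
      intro w
      rw [zero_add, pow_one, ← hcomm, commutatorElement_def]
      exact S.mul_mem (Subgroup.Normal.conj_mem inferInstance g hg _) (S.inv_mem hg)
    | succ k ih =>
      intro w
      rw [pow_succ', Module.End.mul_apply, ← hcomm]
      exact Subgroup.commutator_mem_commutator (ih w) hg
  have hzero : (1 - T) ^ (c + 1) = 0 := by
    ext1 w
    have h := hmem c w
    rw [hc, Subgroup.mem_bot, ← map_one inl] at h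
    exact Multiplicative.ofAdd.injective (inl_injective h)
  -- by Frobenius, `0 = (1 - T) ^ q ^ (c + 1) = 1 - T ^ q ^ (c + 1)`
  have hpow : T ^ q ^ (c + 1) = 1 := by
    have : CharP (Module.End (ZMod q) (A → ZMod q)) q :=
      charP_of_injective_algebraMap (algebraMap (ZMod q) _).injective q
    have h := sub_pow_char_pow_of_commute q (c + 1) (Commute.one_left T)
    rw [pow_eq_zero_of_le (Nat.lt_pow_self (Fact.out : q.Prime).one_lt).le hzero, one_pow] at h
    exact (sub_eq_zero.1 h.symm).symm
  have hone : g.right.1 ^ q ^ (c + 1) = 1 := by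
    classical
    by_contra hne
    have h := congrFun (LinearMap.congr_fun hpow (Pi.single 1 1)) 1
    rw [transEnd_pow, mul_one, inv_pow, Pi.single_eq_of_ne (inv_ne_one.2 hne)] at h
    simp at h
  rw [← orderOf_eq_one_iff]
  exact Nat.eq_one_of_dvd_coprimes
    (((Nat.Prime.coprime_iff_not_dvd Fact.out).2 hq).pow_left _)
    (orderOf_dvd_of_pow_eq_one hone) (orderOf_dvd_natCard _)

/-! ### Raising the Fitting height -/

open SemidirectProduct in
/-- The inductive step: the Fitting height of a CDG can be raised by one. -/
lemma exists_CDG_succ (n : ℕ) (hn : 1 ≤ n)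
    (ih : ∃ (A : Type) (_ : Group A) (_ : Finite A), IsSolvable A ∧ IsCDG A ∧ FittingHeightIs A n) :
    ∃ (G : Type) (_ : Group G) (_ : Finite G),
      IsSolvable G ∧ IsCDG G ∧ FittingHeightIs G (n + 1) := by
  obtain ⟨A, _, _, hsol, hcdg, ⟨F, hF⟩, hmin⟩ := ih
  obtain ⟨q, hqp, hqA, hq6⟩ := Nat.exists_prime_gt_modEq_one (k := 6) (Nat.card A) (by norm_num)
  have : Fact q.Prime := ⟨hqp⟩
  have hndvd : ¬ q ∣ Nat.card A := fun h => (Nat.le_of_dvd Nat.card_pos h).not_gt hqA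
  have h6 : 6 ∣ Nat.card (ZMod q)ˣ := by
    rw [Nat.card_eq_fintype_card, ZMod.card_units]
    exact (Nat.modEq_iff_dvd' hqp.one_le).1 hq6.symm
  let K := ZMod q
  let N := Multiplicative (A → K)
  let G := N ⋊[transAut A K] (A × Kˣ)
  have : Finite N := inferInstanceAs (Finite (A → ZMod q))
  have : Finite G := Finite.of_equiv _ equivProd.symm
  have hsurj : Function.Surjective (rightHom : G →* A × Kˣ) := rightHom_surjective
  refine ⟨G, inferInstance, inferInstance, ?_, ?_, ⟨_, (hF.prod_comm hn).comap_succ rightHom ?_⟩, ?_⟩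
  · have : Group.IsSolvable A := hsol
    exact Group.isSolvable_of_ker_le_range (inl : N →* G) (rightHom : G →* A × Kˣ)
      range_inl_eq_ker_rightHom.ge
  · refine isCDG_semidirectProduct _ (fun b hb f => ?_) h6 hcdg
    -- the endomorphism `1 - b` of the translation module is multiplication by a nonzero scalar
    have hb' : (1 - b : K) ≠ 0 := fun h => hb (Units.ext (sub_eq_zero.1 h).symm)
    refine ⟨.ofAdd ((1 - b : K)⁻¹ • f.toAdd), ?_⟩
    apply Multiplicative.toAdd.injective
    ext x
    change (1 - b : K)⁻¹ * f.toAdd x + -((b : K) * ((1 - b : K)⁻¹ * f.toAdd ((1 : A)⁻¹ * x))) =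
      f.toAdd x
    rw [inv_one, one_mul]
    linear_combination f.toAdd x * inv_mul_cancel₀ hb'
  · rw [← range_inl_eq_ker_rightHom, MonoidHom.range_eq_map, ← Subgroup.map_lowerCentralSeries,
      Subgroup.top_lowerCentralSeries_one, (commutator_eq_bot_iff_center_eq_top N).2
      CommGroup.center_eq_top, Subgroup.map_bot]
  · rintro m ⟨E, hE⟩
    have : Nontrivial G := by
      refine ⟨inl (.ofAdd fun _ => 1), inl (.ofAdd 0), fun h => ?_⟩
      exact one_ne_zero (congrFun (Multiplicative.ofAdd.injective (inl_injective h)) (1 : A))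
    obtain _ | m := m
    · exact absurd (hE.1.symm.trans hE.2.1) bot_ne_top
    have := hE.2.2.1 1
    obtain ⟨c, hc⟩ := hE.lcs (i := 0) (by omega)
    rw [hE.1, le_bot_iff] at hc
    have h1 : E 1 ≤ ((MonoidHom.fst A Kˣ).comp (rightHom : G →* A × Kˣ)).ker := fun g hg =>
      right_fst_eq_one q hndvd (E 1) c hc hg
    exact Nat.succ_le_succ
      (hmin m ⟨_, hE.map_succ _ (Prod.fst_surjective.comp hsurj) h1⟩)

/-- The base of the induction: a group of order two has Fitting height one. -/
lemma exists_CDG_one : ∃ (G : Type) (_ : Group G) (_ : Finite G),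
    IsSolvable G ∧ IsCDG G ∧ FittingHeightIs G 1 := by
  refine ⟨Multiplicative (ZMod 2), inferInstance, inferInstanceAs (Finite (ZMod 2)),
    inferInstanceAs (Group.IsSolvable _), ?_, ⟨fun i => if i = 0 then ⊥ else ⊤, ?_⟩, ?_⟩
  · have : Finite (Multiplicative (ZMod 2)) := inferInstanceAs (Finite (ZMod 2))
    exact isCDG_of_comm _
  · refine ⟨rfl, rfl, fun i => inferInstance, fun i hi => ?_, fun i hi hn => ?_⟩
    · simp
    · unfold IsNilpotentQuot
      infer_instance
  · rintro m ⟨E, hE⟩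
    by_contra! hm
    obtain rfl : m = 0 := by omega
    exact absurd (hE.1.symm.trans hE.2.1) bot_ne_top

/-- **Theorem (Statement 0).** For every integer `l > 1` there is a finite solvable group `G`
which is a CDG and whose Fitting height equals `l`. -/
theorem exists_solvable_CDG_of_fittingHeight (l : ℕ) (hl : 1 < l) :
    ∃ (G : Type) (_ : Group G) (_ : Finite G),
      IsSolvable G ∧ IsCDG G ∧ FittingHeightIs G l := by
  induction l, hl.le using Nat.le_induction with
  | base => exact exists_CDG_one
  | succ n hn ih =>
    obtain rfl | h := hn.eq_or_lt
    · exact exists_CDG_succ _ hn exists_CDG_one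
    · exact exists_CDG_succ n hn (ih h)
end

section
/- Let G be a finite group, let k be a field of prime order, and let V be a finite-dimensional k[G]-module with dim V = n ≥ 1. If m is a positive integer dividing |k| − 1, then there exists an extraspecial group E of order |k|^{2n+1} on which G acts by automorphisms centralizing Z(E), together with an automorphism σ of E of order m that commutes with the action of G and such that ⟨σ⟩ acts Frobeniusly on E/E'; moreover, if m is odd, σ can be chosen so that ⟨σ⟩ acts Frobeniusly on E. -/
/-!
The group `E` is the Heisenberg group of `V`: the set `V × V* × k` with multiplication
`(v, f, z) (w, g, y) = (v + w, f + g, z + y + f w)`. Its commutators are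
`[(v, f, z), (w, g, y)] = (0, 0, f w - g v)`, so nondegeneracy of the pairing between `V` and `V*`
makes both the centre and the commutator subgroup equal to `{(0, 0, z)}`.

Any linear action of `G` on `V` preserves the pairing when `G` acts on `V*` contragrediently, so
`(v, f, z) ↦ (g v, f ∘ g⁻¹, z)` is an automorphism that fixes the centre. A scalar `c ∈ kˣ` gives the
automorphism `(v, f, z) ↦ (c v, c f, c² z)`, which commutes with `G`; since `kˣ`, for `k = ZMod p`, is cyclic of order
`p - 1` there is such a `c` of order `m`. If `c ^ i ≠ 1`, then `c ^ i` fixes no nonzero vector of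
`V × V*`; if moreover `m` is odd, then `c ^ (2 i) ≠ 1`, so the automorphism has no fixed point
`≠ 1` on the centre either.
-/

/-- An extraspecial `p`-group: a `p`-group whose center and commutator subgroup coincide
and have order `p`. -/
def IsExtraspecial (p : ℕ) (E : Type*) [Group E] : Prop :=
  IsPGroup p E ∧ Subgroup.center E = commutator E ∧ Nat.card (Subgroup.center E) = p

/-- The Heisenberg group of a `k`-vector space `V`, with underlying set `V × V* × k`. -/
@[ext] structure Heis (k V : Type) [Field k] [AddCommGroup V] [Module k V] where
  v : V
  f : Module.Dual k V
  z : k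

namespace Heis

variable {k V : Type} [Field k] [AddCommGroup V] [Module k V]

instance : Mul (Heis k V) := ⟨fun a b => ⟨a.v + b.v, a.f + b.f, a.z + b.z + a.f b.v⟩⟩
instance : One (Heis k V) := ⟨⟨0, 0, 0⟩⟩
instance : Inv (Heis k V) := ⟨fun a => ⟨-a.v, -a.f, -a.z + a.f a.v⟩⟩

@[simp] lemma mul_v (a b : Heis k V) : (a * b).v = a.v + b.v := rfl
@[simp] lemma mul_f (a b : Heis k V) : (a * b).f = a.f + b.f := rfl
@[simp] lemma mul_z (a b : Heis k V) : (a * b).z = a.z + b.z + a.f b.v := rfl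
@[simp] lemma one_v : (1 : Heis k V).v = 0 := rfl
@[simp] lemma one_f : (1 : Heis k V).f = 0 := rfl
@[simp] lemma one_z : (1 : Heis k V).z = 0 := rfl
@[simp] lemma inv_v (a : Heis k V) : (a⁻¹).v = -a.v := rfl
@[simp] lemma inv_f (a : Heis k V) : (a⁻¹).f = -a.f := rfl
@[simp] lemma inv_z (a : Heis k V) : (a⁻¹).z = -a.z + a.f a.v := rfl

instance : Group (Heis k V) := Group.ofLeftAxioms
  (fun a b c => by
    ext
    · simp [add_assoc]
    · simp [add_assoc]
    · simp only [mul_z, mul_v, mul_f, LinearMap.add_apply, map_add]; ring)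
  (fun a => by ext <;> simp)
  (fun a => by ext <;> simp)

lemma mem_center_iff (a : Heis k V) : a ∈ Subgroup.center (Heis k V) ↔ a.v = 0 ∧ a.f = 0 := by
  rw [Subgroup.mem_center_iff]
  constructor
  · intro h
    constructor
    · rw [← Module.forall_dual_apply_eq_zero_iff k]
      intro f
      simpa using congrArg Heis.z (h ⟨0, f, 0⟩)
    · ext w
      simpa using (congrArg Heis.z (h ⟨w, 0, 0⟩))
  · rintro ⟨h1, h2⟩ b
    ext <;> simp [h1, h2, add_comm]

lemma mk_mem_commutator [Nontrivial V] (z : k) :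
    (⟨0, 0, z⟩ : Heis k V) ∈ commutator (Heis k V) := by
  obtain ⟨w, hw⟩ := exists_ne (0 : V)
  obtain ⟨f, hf⟩ := Module.Projective.exists_dual_ne_zero k hw
  -- the commutator of `(0, t f, 0)` and `(w, 0, 0)` is `(0, 0, t f w)`
  have h := Subgroup.commutator_mem_commutator
    (Subgroup.mem_top (⟨0, (z / f w) • f, 0⟩ : Heis k V))
    (Subgroup.mem_top (⟨w, 0, 0⟩ : Heis k V))
  rw [← commutator_def] at h
  convert h using 1
  ext <;> simp [commutatorElement_def, hf]

lemma center_eq_commutator [Nontrivial V] :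
    Subgroup.center (Heis k V) = commutator (Heis k V) := by
  apply le_antisymm
  · rintro ⟨v, f, z⟩ ha
    obtain ⟨rfl, rfl⟩ := (mem_center_iff _).1 ha
    exact mk_mem_commutator z
  · rw [commutator_def, Subgroup.commutator_le]
    intro a _ b _
    rw [mem_center_iff]
    simp [commutatorElement_def]

lemma card_center : Nat.card (Subgroup.center (Heis k V)) = Nat.card k :=
  Nat.card_congr
    { toFun := fun a => a.1.z
      invFun := fun z => ⟨⟨0, 0, z⟩, (mem_center_iff _).2 ⟨rfl, rfl⟩⟩
      left_inv := by
        rintro ⟨⟨v, f, z⟩, ha⟩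
        obtain ⟨rfl, rfl⟩ := (mem_center_iff _).1 ha
        rfl
      right_inv := fun _ => rfl }

lemma card_eq [Finite k] [FiniteDimensional k V] :
    Nat.card (Heis k V) = Nat.card k ^ (2 * Module.finrank k V + 1) := by
  have e : Heis k V ≃ V × Module.Dual k V × k :=
    { toFun := fun a => (a.v, a.f, a.z)
      invFun := fun a => ⟨a.1, a.2.1, a.2.2⟩
      left_inv := fun _ => rfl
      right_inv := fun _ => rfl }
  rw [Nat.card_congr e, Nat.card_prod, Nat.card_prod, Module.natCard_eq_pow_finrank (K := k),
    Module.natCard_eq_pow_finrank (K := k) (V := Module.Dual k V), Subspace.dual_finrank_eq]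
  ring

/-- The automorphism `(v, f, z) ↦ (c v, c f, c² z)` attached to a scalar `c`. -/
def scale : kˣ →* MulAut (Heis k V) where
  toFun c :=
    { toFun := fun a => ⟨c • a.v, c • a.f, c ^ 2 * a.z⟩
      invFun := fun a => ⟨c⁻¹ • a.v, c⁻¹ • a.f, (c⁻¹ : kˣ) ^ 2 * a.z⟩
      left_inv := fun a => by ext <;> simp
      right_inv := fun a => by ext <;> simp
      map_mul' := fun a b => by
        ext
        · simp
        · simp
        · simp [Units.smul_def]; ring }
  map_one' := by ext <;> simp
  map_mul' c d := by
    ext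
    · simp [mul_smul]
    · simp [mul_smul]
    · simp; ring

@[simp] lemma scale_apply (c : kˣ) (a : Heis k V) :
    scale c a = ⟨c • a.v, c • a.f, c ^ 2 * a.z⟩ := rfl

lemma scale_injective [Nontrivial V] :
    Function.Injective (scale : kˣ →* MulAut (Heis k V)) := by
  intro c d h
  obtain ⟨w, hw⟩ := exists_ne (0 : V)
  have := congrArg Heis.v (DFunLike.congr_fun h (⟨w, 0, 0⟩ : Heis k V))
  simp only [scale_apply, Units.smul_def] at this
  exact Units.ext (smul_left_injective k hw this)

/-- The action `(v, f, z) ↦ (g v, f ∘ g⁻¹, z)` of a group acting linearly on `V`. -/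
def act (G : Type) [Group G] [DistribMulAction G V] [SMulCommClass G k V] :
    G →* MulAut (Heis k V) where
  toFun g :=
    { toFun := fun a => ⟨g • a.v, a.f ∘ₗ DistribSMul.toLinearMap k V g⁻¹, a.z⟩
      invFun := fun a => ⟨g⁻¹ • a.v, a.f ∘ₗ DistribSMul.toLinearMap k V g, a.z⟩
      left_inv := fun a => by ext <;> simp
      right_inv := fun a => by ext <;> simp
      map_mul' := fun a b => by ext <;> simp }
  map_one' := by ext <;> simp
  map_mul' c d := by ext <;> simp [mul_smul]

@[simp] lemma act_apply {G : Type} [Group G] [DistribMulAction G V] [SMulCommClass G k V]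
    (g : G) (a : Heis k V) :
    act G g a = ⟨g • a.v, a.f ∘ₗ DistribSMul.toLinearMap k V g⁻¹, a.z⟩ := rfl

/-- A scalar other than `1` has no nonzero fixed vector. -/
lemma eq_zero_of_smul_eq {W : Type} [AddCommGroup W] [Module k W] {c : kˣ} (hc : c ≠ 1) {w : W}
    (h : c • w = w) : w = 0 := by
  by_contra hw
  refine hc (Units.ext (smul_left_injective k hw ?_))
  simpa [Units.smul_def] using h

end Heis

/-- **Lemma (Statement 6).** If `G` acts linearly on an `n`-dimensional (`n ≥ 1`) vector space
`V` over the field of prime order `p` and `m ∣ p - 1` with `m > 0`, then there is an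
extraspecial group `E` of order `p ^ (2n + 1)` on which `G` acts by automorphisms centralizing
`Z(E)`, together with an automorphism `σ` of `E` of order `m` commuting with the `G`-action
such that `⟨σ⟩` acts Frobeniusly on `E/E'`; moreover if `m` is odd, `σ` can be chosen so that
`⟨σ⟩` acts Frobeniusly on `E`. -/
theorem extraspecial_with_actions (p : ℕ) [Fact p.Prime] (G : Type) [Group G] [Finite G]
    (V : Type) [AddCommGroup V] [Module (ZMod p) V]
    [DistribMulAction G V] [SMulCommClass G (ZMod p) V]
    (n : ℕ) (hn : 1 ≤ n) (hd : Module.finrank (ZMod p) V = n)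
    (m : ℕ) (hm : 0 < m) (hdvd : m ∣ p - 1) :
    ∃ (E : Type) (_ : Group E),
      IsExtraspecial p E ∧ Nat.card E = p ^ (2 * n + 1) ∧
      ∃ (φ : G →* MulAut E) (σ : MulAut E),
        (∀ g : G, ∀ e ∈ Subgroup.center E, φ g e = e) ∧
        orderOf σ = m ∧
        (∀ g : G, σ * φ g = φ g * σ) ∧
        (∀ i : ℤ, σ ^ i ≠ 1 → ∀ a : E,
          a⁻¹ * (σ ^ i) a ∈ commutator E → a ∈ commutator E) ∧
        (Odd m → ∀ i : ℤ, σ ^ i ≠ 1 → ∀ a : E, (σ ^ i) a = a → a = 1) := by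
  have : Nontrivial V := Module.nontrivial_of_finrank_pos (R := ZMod p) (by omega)
  have : FiniteDimensional (ZMod p) V := Module.finite_of_finrank_pos (by omega)
  obtain ⟨c, hc⟩ : ∃ c : (ZMod p)ˣ, orderOf c = m := by
    obtain ⟨c, hc⟩ := IsCyclic.exists_ofOrder_eq_natCard (α := (ZMod p)ˣ)
    rw [Nat.card_eq_fintype_card, ZMod.card_units] at hc
    obtain ⟨d, hd⟩ := hdvd
    have hp := (Fact.out : p.Prime).two_le
    refine ⟨c ^ d, ?_⟩
    have hd0 : d ≠ 0 := by rintro rfl; omega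
    rw [orderOf_pow_of_dvd hd0 (by rw [hc, hd]; exact dvd_mul_left d m), hc, hd,
      Nat.mul_div_cancel _ (Nat.pos_of_ne_zero hd0)]
  have hcard : Nat.card (Heis (ZMod p) V) = p ^ (2 * n + 1) := by
    rw [Heis.card_eq, Nat.card_zmod, hd]
  refine ⟨Heis (ZMod p) V, inferInstance,
    ⟨IsPGroup.of_card hcard, Heis.center_eq_commutator, by rw [Heis.card_center, Nat.card_zmod]⟩,
    hcard, Heis.act G, Heis.scale c, ?_, ?_, ?_, ?_, ?_⟩
  · intro g e he
    obtain ⟨h1, h2⟩ := (Heis.mem_center_iff e).1 he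
    ext <;> simp [h1, h2]
  · rw [orderOf_injective _ Heis.scale_injective, hc]
  · intro g
    ext a
    · simp [Units.smul_def, smul_comm]
    · simp [Units.smul_def]
    · simp
  · intro i hi a ha
    rw [← map_zpow] at hi ha
    have hci : c ^ i ≠ 1 := fun h => hi (by rw [h, map_one])
    rw [← Heis.center_eq_commutator, Heis.mem_center_iff] at ha ⊢
    simp only [Heis.mul_v, Heis.mul_f, Heis.inv_v, Heis.inv_f, Heis.scale_apply,
      neg_add_eq_zero] at ha
    exact ⟨Heis.eq_zero_of_smul_eq hci ha.1.symm, Heis.eq_zero_of_smul_eq hci ha.2.symm⟩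
  · intro hodd i hi a ha
    rw [← map_zpow] at hi ha
    have hci : c ^ i ≠ 1 := fun h => hi (by rw [h, map_one])
    -- the order of `c ^ i` divides `m`, so it is odd
    have hci2 : (c ^ i) ^ 2 ≠ 1 := by
      intro h
      have h1 : orderOf (c ^ i) ∣ m := by
        rw [orderOf_dvd_iff_pow_eq_one, ← zpow_natCast, zpow_comm, zpow_natCast, ← hc,
          pow_orderOf_eq_one, one_zpow]
      have h2 : orderOf (c ^ i) ∣ 2 := orderOf_dvd_of_pow_eq_one h
      have h3 := Nat.dvd_gcd h1 h2
      rw [Nat.Coprime.gcd_eq_one hodd.coprime_two_right] at h3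
      exact hci (orderOf_eq_one_iff.1 (Nat.dvd_one.1 h3))
    ext1
    · exact Heis.eq_zero_of_smul_eq hci (congrArg Heis.v ha)
    · exact Heis.eq_zero_of_smul_eq hci (congrArg Heis.f ha)
    · refine Heis.eq_zero_of_smul_eq hci2 ?_
      have := congrArg Heis.z ha
      simpa only [Heis.scale_apply, Units.smul_def, Units.val_pow_eq_pow_val, smul_eq_mul] using this
end
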